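/- arXiv:1011.1835 — 2 statements merged into one kernel-verified Lean document; each statement's English description precedes it below -/
import Mathlib

section
/- Consider the Neumann system with parameter κ on the Stiefel variety: Ẋ = P − (1+2κ)XPᵀX, Ṗ = −AX − XPᵀP + (1+2κ)PXᵀP + XXᵀAX, for differentiable curves X(t), P(t) of n×r real matrices and A a real diagonal n×n matrix. If at a time t the constraints XᵀX = I_r and XᵀP + PᵀX = 0 hold, then at that time d/dt(XᵀX) = 0 and d/dt(XᵀP + PᵀX) = 0; i.e. the constraints defining the cotangent bundle of the Stiefel variety are preserved by the flow (the Lagrange multipliers are Π = 0 and Λ = XᵀAX − PᵀP). -/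
open Matrix

/-! On `XᵀX = 1` the flow satisfies `Xᵀ Ẋ = XᵀP - (1 + 2κ) PᵀX` and `Xᵀ Ṗ = -Ẋᵀ P`. The first
identity gives `d/dt (XᵀX) = -2κ (XᵀP + PᵀX)`, which vanishes where `XᵀP + PᵀX = 0`. The second
says `d/dt (XᵀP) = 0`, and `XᵀP + PᵀX` is the sum of `XᵀP` and its transpose. The potential `A`
drops out because the multiplier term `X XᵀA X` cancels the normal part of the force `-A X`. -/

section EntrywiseDerivative

variable {𝕜 𝔸 l m n : Type*} [NontriviallyNormedField 𝕜]

/-- The matrix curve `M` has derivative `M'` at `t`. This is phrased entry by entry because matrices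
carry no canonical norm. -/
def HasEntrywiseDerivAt [NormedAddCommGroup 𝔸] [NormedSpace 𝕜 𝔸] (M : 𝕜 → Matrix m n 𝔸)
    (M' : Matrix m n 𝔸) (t : 𝕜) : Prop :=
  ∀ i j, HasDerivAt (fun s => M s i j) (M' i j) t

namespace HasEntrywiseDerivAt

theorem transpose [NormedAddCommGroup 𝔸] [NormedSpace 𝕜 𝔸] {M : 𝕜 → Matrix m n 𝔸}
    {M' : Matrix m n 𝔸} {t : 𝕜} (hM : HasEntrywiseDerivAt M M' t) :
    HasEntrywiseDerivAt (fun s => (M s)ᵀ) M'ᵀ t :=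
  fun i j => hM j i

theorem add [NormedAddCommGroup 𝔸] [NormedSpace 𝕜 𝔸] {M N : 𝕜 → Matrix m n 𝔸}
    {M' N' : Matrix m n 𝔸} {t : 𝕜} (hM : HasEntrywiseDerivAt M M' t)
    (hN : HasEntrywiseDerivAt N N' t) :
    HasEntrywiseDerivAt (fun s => M s + N s) (M' + N') t :=
  fun i j => (hM i j).add (hN i j)

theorem mul [NormedRing 𝔸] [NormedAlgebra 𝕜 𝔸] [Fintype m] {M : 𝕜 → Matrix l m 𝔸}
    {N : 𝕜 → Matrix m n 𝔸} {M' : Matrix l m 𝔸} {N' : Matrix m n 𝔸} {t : 𝕜}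
    (hM : HasEntrywiseDerivAt M M' t) (hN : HasEntrywiseDerivAt N N' t) :
    HasEntrywiseDerivAt (fun s => M s * N s) (M' * N t + M t * N') t := by
  intro i j
  simp only [Matrix.add_apply, mul_apply, ← Finset.sum_add_distrib]
  exact HasDerivAt.fun_sum fun k _ => (hM i k).mul (hN k j)

end HasEntrywiseDerivAt

end EntrywiseDerivative

section VectorField

variable {m n R : Type*} [Fintype m] [Fintype n] [CommRing R]

/-- The `X`-component `P - c X PᵀX` of the Neumann vector field, where `c` stands for `1 + 2κ`. -/
def neumannVelocity (c : R) (X P : Matrix m n R) : Matrix m n R :=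
  P - c • (X * Pᵀ * X)

/-- The `P`-component `-A X - X PᵀP + c P XᵀP + X XᵀA X` of the Neumann vector field with potential
`A`, where `c` stands for `1 + 2κ`. -/
def neumannForce (A : Matrix m m R) (c : R) (X P : Matrix m n R) : Matrix m n R :=
  -(A * X) - X * Pᵀ * P + c • (P * Xᵀ * P) + X * Xᵀ * A * X

theorem transpose_neumannVelocity_mul (c : R) (X P : Matrix m n R) :
    (neumannVelocity c X P)ᵀ * P = Pᵀ * P - c • (Xᵀ * P * (Xᵀ * P)) := by
  simp only [neumannVelocity, transpose_sub, transpose_smul, transpose_mul, transpose_transpose,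
    Matrix.sub_mul, Matrix.smul_mul, Matrix.mul_assoc]

variable [DecidableEq n] {X : Matrix m n R}

theorem transpose_mul_neumannVelocity (c : R) (P : Matrix m n R) (hX : Xᵀ * X = 1) :
    Xᵀ * neumannVelocity c X P = Xᵀ * P - c • (Pᵀ * X) := by
  simp only [neumannVelocity, Matrix.mul_sub, Matrix.mul_smul, ← Matrix.mul_assoc, hX,
    Matrix.one_mul]

theorem transpose_mul_neumannForce (A : Matrix m m R) (c : R) (P : Matrix m n R)
    (hX : Xᵀ * X = 1) :
    Xᵀ * neumannForce A c X P = -((neumannVelocity c X P)ᵀ * P) := by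
  calc
    Xᵀ * neumannForce A c X P
        = -(Xᵀ * A * X) - Pᵀ * P + c • (Xᵀ * P * (Xᵀ * P)) + Xᵀ * A * X := by
      simp only [neumannForce, Matrix.mul_add, Matrix.mul_sub, Matrix.mul_neg, Matrix.mul_smul,
        ← Matrix.mul_assoc, hX, Matrix.one_mul]
    _ = -((neumannVelocity c X P)ᵀ * P) := by
      rw [transpose_neumannVelocity_mul]
      abel

theorem transpose_neumannVelocity_mul_self_add (c : R) (P : Matrix m n R)
    (hX : Xᵀ * X = 1) :
    (neumannVelocity c X P)ᵀ * X + Xᵀ * neumannVelocity c X P =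
      (1 - c) • (Xᵀ * P + Pᵀ * X) := by
  have hVX : (neumannVelocity c X P)ᵀ * X = Pᵀ * X - c • (Xᵀ * P) := by
    simpa only [transpose_mul, transpose_sub, transpose_smul, transpose_transpose] using
      congrArg transpose (transpose_mul_neumannVelocity c P hX)
  rw [hVX, transpose_mul_neumannVelocity c P hX]
  module

end VectorField

section Flow

variable {𝕜 𝔸 m n : Type*} [NontriviallyNormedField 𝕜] [NormedCommRing 𝔸] [NormedAlgebra 𝕜 𝔸]
  [Fintype m] [Fintype n] [DecidableEq n] {A : Matrix m m 𝔸} {c : 𝔸} {X P : 𝕜 → Matrix m n 𝔸}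
  {t : 𝕜}

theorem hasEntrywiseDerivAt_transpose_mul_self_of_neumann
    (hX : HasEntrywiseDerivAt X (neumannVelocity c (X t) (P t)) t) (hXX : (X t)ᵀ * X t = 1) :
    HasEntrywiseDerivAt (fun s => (X s)ᵀ * X s)
      ((1 - c) • ((X t)ᵀ * P t + (P t)ᵀ * X t)) t := by
  simpa only [transpose_neumannVelocity_mul_self_add c (P t) hXX] using hX.transpose.mul hX

theorem hasEntrywiseDerivAt_transpose_mul_of_neumann
    (hX : HasEntrywiseDerivAt X (neumannVelocity c (X t) (P t)) t)
    (hP : HasEntrywiseDerivAt P (neumannForce A c (X t) (P t)) t) (hXX : (X t)ᵀ * X t = 1) :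
    HasEntrywiseDerivAt (fun s => (X s)ᵀ * P s) 0 t := by
  simpa only [transpose_mul_neumannForce A c (P t) hXX, add_neg_cancel] using hX.transpose.mul hP

theorem neumann_preserves_constraints_general
    (hX : HasEntrywiseDerivAt X (neumannVelocity c (X t) (P t)) t)
    (hP : HasEntrywiseDerivAt P (neumannForce A c (X t) (P t)) t)
    (hXX : (X t)ᵀ * X t = 1) (hXP : (X t)ᵀ * P t + (P t)ᵀ * X t = 0) :
    HasEntrywiseDerivAt (fun s => (X s)ᵀ * X s) 0 t ∧
      HasEntrywiseDerivAt (fun s => (X s)ᵀ * P s + (P s)ᵀ * X s) 0 t := by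
  constructor
  · simpa only [hXP, smul_zero] using hasEntrywiseDerivAt_transpose_mul_self_of_neumann hX hXX
  · have hXP' := hasEntrywiseDerivAt_transpose_mul_of_neumann hX hP hXX
    simpa only [transpose_mul, transpose_transpose, transpose_zero, add_zero] using
      hXP'.add hXP'.transpose

end Flow

/-- The Neumann flow with parameter κ on n×r matrices preserves the Stiefel
cotangent bundle constraints XᵀX = I_r and XᵀP + PᵀX = 0. -/
theorem neumann_preserves_constraints {n r : ℕ} (a : Fin n → ℝ)
    (A : Matrix (Fin n) (Fin n) ℝ) (hA : A = Matrix.diagonal a)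
    (κ : ℝ) (X P : ℝ → Matrix (Fin n) (Fin r) ℝ)
    (hX : ∀ t i j, HasDerivAt (fun s => X s i j)
      ((P t - (1 + 2 * κ) • (X t * (P t)ᵀ * X t)) i j) t)
    (hP : ∀ t i j, HasDerivAt (fun s => P s i j)
      ((-(A * X t) - X t * (P t)ᵀ * P t + (1 + 2 * κ) • (P t * (X t)ᵀ * P t)
        + X t * (X t)ᵀ * A * X t) i j) t)
    (t₀ : ℝ)
    (hc1 : (X t₀)ᵀ * X t₀ = 1)
    (hc2 : (X t₀)ᵀ * P t₀ + (P t₀)ᵀ * X t₀ = 0) :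
    (∀ i j, HasDerivAt (fun s => ((X s)ᵀ * X s) i j) 0 t₀) ∧
    (∀ i j, HasDerivAt (fun s => ((X s)ᵀ * P s + (P s)ᵀ * X s) i j) 0 t₀) :=
  neumann_preserves_constraints_general (hX t₀) (hP t₀) hc1 hc2
end

section
/- Let X(t), P(t) be differentiable curves of n×r real matrices satisfying for all t the Stiefel constraints XᵀX = I_r, XᵀP + PᵀX = 0 and the Neumann equations with parameter κ: Ẋ = P − (1+2κ)XPᵀX, Ṗ = −AX − XPᵀP + (1+2κ)PXᵀP + XXᵀAX. Then for every real λ the n×n matrix Lax representation holds: d/dt L(λ) = [A(λ), L(λ)], where L(λ) = λΦ + XXᵀ − λ²A and A(λ) = Φ − λA, with Φ = PXᵀ − XPᵀ. -/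
open Matrix

/-!
Along the flow, `S = XXᵀ` and `Φ = PXᵀ - XPᵀ` satisfy `Ṡ = [Φ, S]` and `Φ̇ = [S, A]`. The terms
carrying the factor `1 + 2κ` drop out: by tangency they are an infinitesimal right rotation
`(X, P) ↦ (XΩ, PΩ)` with `Ω` skew-symmetric, under which `S` and `Φ` are invariant. The Lax equation
packages the two equations, because `[Φ - λA, λΦ + S - λ²A] = λ[S, A] + [Φ, S]` in any Lie algebra.
-/

section MatrixCalculus

variable {𝕜 𝔸 l m n : Type*} [NontriviallyNormedField 𝕜] {t : 𝕜}

theorem hasDerivAt_matrix_iff [Finite n] [NormedAddCommGroup 𝔸] [NormedSpace 𝕜 𝔸]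
    {M : 𝕜 → Matrix m n 𝔸} {M' : Matrix m n 𝔸} :
    HasDerivAt M M' t ↔ ∀ i j, HasDerivAt (fun s => M s i j) (M' i j) t := by
  have := Fintype.ofFinite n
  exact hasDerivAt_pi.trans <| forall_congr' fun _ => hasDerivAt_pi

theorem hasDerivAt_matrix_transpose [Finite m] [Finite n] [NormedAddCommGroup 𝔸]
    [NormedSpace 𝕜 𝔸] {M : 𝕜 → Matrix m n 𝔸} {M' : Matrix m n 𝔸} (hM : HasDerivAt M M' t) :
    HasDerivAt (fun s => (M s)ᵀ) M'ᵀ t :=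
  hasDerivAt_matrix_iff.2 fun i j => hasDerivAt_matrix_iff.1 hM j i

theorem hasDerivAt_matrix_mul [Fintype m] [Finite n] [NormedRing 𝔸] [NormedAlgebra 𝕜 𝔸]
    {M : 𝕜 → Matrix l m 𝔸} {N : 𝕜 → Matrix m n 𝔸} {M' : Matrix l m 𝔸} {N' : Matrix m n 𝔸}
    (hM : HasDerivAt M M' t) (hN : HasDerivAt N N' t) :
    HasDerivAt (fun s => M s * N s) (M' * N t + M t * N') t := by
  simp only [hasDerivAt_matrix_iff, mul_apply, Matrix.add_apply, ← Finset.sum_add_distrib]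
    at hM hN ⊢
  exact fun i j => HasDerivAt.fun_sum fun k _ => (hM i k).fun_mul (hN k j)

end MatrixCalculus

theorem lie_sub_smul_smul_add_sub_sq_smul {R L : Type*} [CommRing R] [LieRing L] [LieAlgebra R L]
    (c : R) (φ s a : L) :
    ⁅φ - c • a, c • φ + s - c ^ 2 • a⁆ = c • ⁅s, a⁆ + ⁅φ, s⁆ := by
  simp only [sub_lie, lie_sub, lie_add, lie_smul, smul_lie, lie_self, ← lie_skew φ a,
    ← lie_skew s a]
  module

section NeumannAlgebra

variable {R n r : Type*} [CommRing R] [Fintype r]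

/-- The matrix `Φ = PXᵀ - XPᵀ`, the momentum map of the left action of the orthogonal group on the
cotangent bundle of the Stiefel variety. -/
def stiefelMomentumMap (X P : Matrix n r R) : Matrix n n R :=
  P * Xᵀ - X * Pᵀ

theorem stiefelMomentumMap_eq_sub_transpose (X P : Matrix n r R) :
    stiefelMomentumMap X P = P * Xᵀ - (P * Xᵀ)ᵀ := by
  rw [stiefelMomentumMap, transpose_mul, transpose_transpose]

variable [Fintype n]

/-- The `X`-component of the Neumann vector field with parameter `κ`: the right-hand side of
the equation for `Ẋ`. -/
def neumannFieldX (κ : R) (X P : Matrix n r R) : Matrix n r R :=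
  P - (1 + 2 * κ) • (X * Pᵀ * X)

/-- The `P`-component of the Neumann vector field with potential `A` and parameter `κ`:
the right-hand side of the equation for `Ṗ`. -/
def neumannFieldP (A : Matrix n n R) (κ : R) (X P : Matrix n r R) : Matrix n r R :=
  -(A * X) - X * Pᵀ * P + (1 + 2 * κ) • (P * Xᵀ * P) + X * Xᵀ * A * X

/-- The Lax matrix `L(λ) = λΦ + XXᵀ - λ²A` of the Neumann flow, with `c` standing for `λ`. -/
def neumannLaxMatrix (A : Matrix n n R) (c : R) (X P : Matrix n r R) : Matrix n n R :=
  c • stiefelMomentumMap X P + X * Xᵀ - c ^ 2 • A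

/-- The second member `A(λ) = Φ - λA` of the Lax pair of the Neumann flow, with `c` standing for
`λ`. -/
def neumannLaxGenerator (A : Matrix n n R) (c : R) (X P : Matrix n r R) : Matrix n n R :=
  stiefelMomentumMap X P - c • A

theorem neumannFieldX_mul_transpose_add (κ : R) {X P : Matrix n r R} (hXP : Xᵀ * P + Pᵀ * X = 0) :
    neumannFieldX κ X P * Xᵀ + X * (neumannFieldX κ X P)ᵀ = P * Xᵀ + X * Pᵀ :=
  calc
    _ = P * Xᵀ + X * Pᵀ - (1 + 2 * κ) • (X * (Xᵀ * P + Pᵀ * X) * Xᵀ) := by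
      simp only [neumannFieldX, transpose_sub, transpose_smul, transpose_mul, transpose_transpose,
        Matrix.sub_mul, Matrix.mul_sub, Matrix.add_mul, Matrix.mul_add, Matrix.smul_mul,
        Matrix.mul_smul, Matrix.mul_assoc]
      module
    _ = P * Xᵀ + X * Pᵀ := by simp [hXP]

theorem lie_stiefelMomentumMap_mul_transpose [DecidableEq r] {X P : Matrix n r R}
    (hX : Xᵀ * X = 1) (hXP : Xᵀ * P + Pᵀ * X = 0) :
    ⁅stiefelMomentumMap X P, X * Xᵀ⁆ = P * Xᵀ + X * Pᵀ :=
  calc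
    _ = P * (Xᵀ * X) * Xᵀ + X * (Xᵀ * X) * Pᵀ - X * (Xᵀ * P + Pᵀ * X) * Xᵀ := by
      simp only [stiefelMomentumMap, Ring.lie_def, Matrix.sub_mul, Matrix.mul_sub, Matrix.add_mul,
        Matrix.mul_add, Matrix.mul_assoc]
      abel
    _ = P * Xᵀ + X * Pᵀ := by simp [hX, hXP]

theorem neumannFieldP_mul_transpose_add (A : Matrix n n R) (κ : R) (X P : Matrix n r R) :
    neumannFieldP A κ X P * Xᵀ + P * (neumannFieldX κ X P)ᵀ =
      P * Pᵀ - X * (Pᵀ * P) * Xᵀ + X * Xᵀ * A * (X * Xᵀ) - A * (X * Xᵀ) := by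
  simp only [neumannFieldX, neumannFieldP, transpose_sub, transpose_smul, transpose_mul,
    transpose_transpose, Matrix.sub_mul, Matrix.mul_sub, Matrix.add_mul, Matrix.neg_mul,
    Matrix.smul_mul, Matrix.mul_smul, Matrix.mul_assoc]
  abel

theorem neumannFieldP_mul_transpose_add_sub_transpose {A : Matrix n n R} (hA : A.IsSymm) (κ : R)
    (X P : Matrix n r R) :
    neumannFieldP A κ X P * Xᵀ + P * (neumannFieldX κ X P)ᵀ -
      (neumannFieldP A κ X P * Xᵀ + P * (neumannFieldX κ X P)ᵀ)ᵀ = ⁅X * Xᵀ, A⁆ := by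
  rw [neumannFieldP_mul_transpose_add]
  -- All terms but `A * (X * Xᵀ)` are symmetric and cancel against their transposes.
  simp only [Ring.lie_def, transpose_sub, transpose_add, transpose_mul, transpose_transpose,
    hA.eq, Matrix.mul_assoc]
  abel

theorem lie_neumannLaxGenerator_neumannLaxMatrix (A : Matrix n n R) (c : R) (X P : Matrix n r R) :
    ⁅neumannLaxGenerator A c X P, neumannLaxMatrix A c X P⁆ =
      c • ⁅X * Xᵀ, A⁆ + ⁅stiefelMomentumMap X P, X * Xᵀ⁆ := by
  classical
  let : LieRing (Matrix n n R) := LieRing.ofAssociativeRing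
  exact lie_sub_smul_smul_add_sub_sq_smul c (stiefelMomentumMap X P) (X * Xᵀ) A

end NeumannAlgebra

section NeumannFlow

variable {𝕜 n r : Type*} [NontriviallyNormedField 𝕜] [Fintype n] [Fintype r]
  {κ t : 𝕜} {X P : 𝕜 → Matrix n r 𝕜}

theorem hasDerivAt_mul_transpose_of_neumann [DecidableEq r]
    (hc1 : (X t)ᵀ * X t = 1) (hc2 : (X t)ᵀ * P t + (P t)ᵀ * X t = 0)
    (hX : HasDerivAt X (neumannFieldX κ (X t) (P t)) t) :
    HasDerivAt (fun s => X s * (X s)ᵀ) ⁅stiefelMomentumMap (X t) (P t), X t * (X t)ᵀ⁆ t := by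
  rw [lie_stiefelMomentumMap_mul_transpose hc1 hc2, ← neumannFieldX_mul_transpose_add κ hc2]
  exact hasDerivAt_matrix_mul hX (hasDerivAt_matrix_transpose hX)

theorem hasDerivAt_stiefelMomentumMap_of_neumann {A : Matrix n n 𝕜} (hA : A.IsSymm)
    (hX : HasDerivAt X (neumannFieldX κ (X t) (P t)) t)
    (hP : HasDerivAt P (neumannFieldP A κ (X t) (P t)) t) :
    HasDerivAt (fun s => stiefelMomentumMap (X s) (P s)) ⁅X t * (X t)ᵀ, A⁆ t := by
  have hM := hasDerivAt_matrix_mul hP (hasDerivAt_matrix_transpose hX)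
  rw [← neumannFieldP_mul_transpose_add_sub_transpose hA κ (X t) (P t)]
  simp only [stiefelMomentumMap_eq_sub_transpose]
  open scoped Matrix.Norms.Elementwise in
  exact hM.fun_sub (hasDerivAt_matrix_transpose hM)

theorem neumann_big_lax_pair_general [DecidableEq r] {A : Matrix n n 𝕜} (hA : A.IsSymm)
    (hc1 : (X t)ᵀ * X t = 1) (hc2 : (X t)ᵀ * P t + (P t)ᵀ * X t = 0)
    (hX : HasDerivAt X (neumannFieldX κ (X t) (P t)) t)
    (hP : HasDerivAt P (neumannFieldP A κ (X t) (P t)) t) (c : 𝕜) :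
    HasDerivAt (fun s => neumannLaxMatrix A c (X s) (P s))
      ⁅neumannLaxGenerator A c (X t) (P t), neumannLaxMatrix A c (X t) (P t)⁆ t := by
  rw [lie_neumannLaxGenerator_neumannLaxMatrix]
  have hΦ := hasDerivAt_stiefelMomentumMap_of_neumann hA hX hP
  have hS := hasDerivAt_mul_transpose_of_neumann hc1 hc2 hX
  open scoped Matrix.Norms.Elementwise in
  exact ((hΦ.fun_const_smul c).fun_add hS).sub_const (c ^ 2 • A)

end NeumannFlow

/-- The Neumann flow with parameter κ on the Stiefel variety implies the
n×n Lax equation d/dt L(λ) = [A(λ), L(λ)] with L(λ) = λΦ + XXᵀ − λ²A, A(λ) = Φ − λA. -/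
theorem neumann_big_lax_pair {n r : ℕ} (a : Fin n → ℝ)
    (A : Matrix (Fin n) (Fin n) ℝ) (hA : A = Matrix.diagonal a)
    (κ : ℝ) (X P : ℝ → Matrix (Fin n) (Fin r) ℝ)
    (hc1 : ∀ t, (X t)ᵀ * X t = 1)
    (hc2 : ∀ t, (X t)ᵀ * P t + (P t)ᵀ * X t = 0)
    (hX : ∀ t i j, HasDerivAt (fun s => X s i j)
      ((P t - (1 + 2 * κ) • (X t * (P t)ᵀ * X t)) i j) t)
    (hP : ∀ t i j, HasDerivAt (fun s => P s i j)
      ((-(A * X t) - X t * (P t)ᵀ * P t + (1 + 2 * κ) • (P t * (X t)ᵀ * P t)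
        + X t * (X t)ᵀ * A * X t) i j) t)
    (Φ : ℝ → Matrix (Fin n) (Fin n) ℝ)
    (hΦ : ∀ t, Φ t = P t * (X t)ᵀ - X t * (P t)ᵀ) :
    ∀ (lam : ℝ) (t : ℝ) (i j : Fin n),
      HasDerivAt (fun s => (lam • Φ s + X s * (X s)ᵀ - lam ^ 2 • A) i j)
        (((Φ t - lam • A) * (lam • Φ t + X t * (X t)ᵀ - lam ^ 2 • A)
          - (lam • Φ t + X t * (X t)ᵀ - lam ^ 2 • A) * (Φ t - lam • A)) i j) t := by
  obtain rfl : Φ = fun t => stiefelMomentumMap (X t) (P t) := funext hΦ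
  have hAs : A.IsSymm := hA ▸ isSymm_diagonal a
  exact fun lam t => hasDerivAt_matrix_iff.1 <| neumann_big_lax_pair_general hAs (hc1 t) (hc2 t)
    (hasDerivAt_matrix_iff.2 (hX t)) (hasDerivAt_matrix_iff.2 (hP t)) lam
end
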